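/- Let μ be a continuous non-negative function on [0,1], not identically zero, three times continuously differentiable, with μ(1) ≠ 0, and suppose either μ(0) ≠ 0 or μ(α) ∼ a α^ν as α → 0⁺ for some a > 0, ν > 0. Let κ : (0,∞) → ℝ be continuous and locally integrable with absolutely convergent Laplace transform ∫₀^∞ e^{−pt} κ(t) dt = 1/(p K(p)) for every real p > 0, and assume κ is differentiable on (0,∞). Then there exist constants C > 0 and t₀ ∈ (0,1) such that for all 0 < t < t₀: κ(t) ≤ C log(1/t) and |κ′(t)| ≤ C t^{−1} log(1/t). -/

import Mathlib

open MeasureTheory Filter Set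

/-- `K(p) = ∫₀¹ p^{α-1} μ(α) dα` for real `p > 0`. -/
noncomputable def Kreal (μ : ℝ → ℝ) (p : ℝ) : ℝ :=
  ∫ α in (0:ℝ)..1, p ^ (α - 1) * μ α

/-!
Write `F z = ∫ exp (α z) dρ(α)` with `dρ = μ dα`, so that `p K(p) = F (log p)`. On the top edge
`Im z = π` of the strip `|Im z| ≤ π`, the image of the cut plane under the logarithm, one has
`Im F ≥ 0`, hence `Im (1 / F) ≤ 0`. Integrating `(1 / F) z * exp z / (exp z - p)` around
rectangles that exhaust the strip therefore exhibits `1 / (p K(p))` as a Stieltjes transform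
`∫ (r + p)⁻¹ dν(r)` of a positive measure `ν`. By uniqueness of Laplace transforms
`κ t = ∫ exp (-r t) dν(r)`, and the inequalities `exp (-u) ≤ (1 + u)⁻¹` and
`u exp (-u) ≤ (1 + u)⁻¹` give `κ t ≤ 1 / K(1/t)` and `|κ' t| ≤ t⁻¹ / K(1/t)`. Finally
`K(p) ≥ c / log p` for large `p`, because `ρ` has mass at least `m ε` in `[1 - ε, 1)`.
-/

open ProbabilityTheory
open scoped Topology ComplexConjugate Real

/-! ### Uniqueness of Laplace transforms -/

section Lerch

variable {E : Type*} [NormedAddCommGroup E] [NormedSpace ℝ E]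

theorem integral_polynomial_smul_eq_zero {g : ℝ → E} {a b : ℝ} (hg : IntegrableOn g (Icc a b))
    (hmoment : ∀ n : ℕ, ∫ x in Icc a b, x ^ n • g x = 0) (P : Polynomial ℝ) :
    ∫ x in Icc a b, P.eval x • g x = 0 := by
  have hint (Q : Polynomial ℝ) : IntegrableOn (fun x ↦ Q.eval x • g x) (Icc a b) :=
    hg.continuousOn_smul Q.continuousOn isCompact_Icc
  induction P using Polynomial.induction_on' with
  | add P Q hP hQ =>
    simp only [Polynomial.eval_add, add_smul]
    rw [integral_add (hint P) (hint Q), hP, hQ, add_zero]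
  | monomial n c =>
    simp only [Polynomial.eval_monomial, mul_smul]
    rw [integral_smul, hmoment, smul_zero]

theorem eq_zero_of_integral_pow_smul_eq_zero [CompleteSpace E] {g : ℝ → E} {a b : ℝ}
    (hg : IntegrableOn g (Icc a b)) (hmoment : ∀ n : ℕ, ∫ x in Icc a b, x ^ n • g x = 0)
    {x₀ : ℝ} (hx₀ : x₀ ∈ Ioo a b) (hcont : ContinuousAt g x₀) : g x₀ = 0 := by
  -- The normalised powers of this bump polynomial concentrate at its unique maximum `x₀`.
  let P : Polynomial ℝ := .C ((b - a) ^ 2) - (.X - .C x₀) ^ 2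
  have hP (x : ℝ) : P.eval x = (b - a) ^ 2 - (x - x₀) ^ 2 := by simp [P]
  have hpeak := tendsto_setIntegral_pow_smul_of_unique_maximum_of_isCompact_of_integrableOn
    (μ := volume) (c := fun x ↦ P.eval x) (isCompact_Icc (a := a) (b := b)) P.continuousOn
    (fun y _ hy ↦ by
      have := sq_pos_of_ne_zero (sub_ne_zero.mpr hy)
      simp only [hP]
      linarith [sub_self x₀])
    (fun x hx ↦ by
      rw [hP, sub_nonneg]
      exact sq_le_sq' (by linarith [hx.1, hx₀.2]) (by linarith [hx.2, hx₀.1]))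
    (by simpa [hP] using sq_pos_of_pos (sub_pos.mpr (hx₀.1.trans hx₀.2)))
    (by rw [interior_Icc, closure_Ioo (hx₀.1.trans hx₀.2).ne]; exact Ioo_subset_Icc_self hx₀)
    hg hcont.continuousWithinAt
  simp only [← Polynomial.eval_pow, integral_polynomial_smul_eq_zero hg hmoment, smul_zero]
    at hpeak
  exact tendsto_nhds_unique hpeak tendsto_const_nhds

theorem image_exp_neg_Ioi_zero : (fun t : ℝ ↦ Real.exp (-t)) '' Ioi 0 = Ioo 0 1 := by
  rw [← Function.comp_def, image_comp, image_neg_Ioi, Real.image_exp_Iio]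
  simp

theorem eqOn_zero_of_integral_exp_neg_smul_eq_zero [CompleteSpace E] {g : ℝ → E}
    (hcont : ContinuousOn g (Ioi 0)) (hint : IntegrableOn (fun t ↦ Real.exp (-t) • g t) (Ioi 0))
    (hzero : ∀ n : ℕ, ∫ t in Ioi 0, Real.exp (-(n + 1) * t) • g t = 0) : EqOn g 0 (Ioi 0) := by
  have hderiv (t : ℝ) (_ : t ∈ Ioi 0) :
      HasDerivWithinAt (fun t ↦ Real.exp (-t)) (-Real.exp (-t)) (Ioi 0) t := by
    simpa using (hasDerivAt_neg t).exp.hasDerivWithinAt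
  have hanti : AntitoneOn (fun t ↦ Real.exp (-t)) (Ioi 0) := fun s _ t _ hst ↦ by simpa using hst
  have hint' : IntegrableOn (fun x ↦ g (-Real.log x)) (Icc 0 1) := by
    rw [integrableOn_Icc_iff_integrableOn_Ioo, ← image_exp_neg_Ioi_zero,
      integrableOn_image_iff_integrableOn_deriv_smul_of_antitoneOn measurableSet_Ioi hderiv hanti]
    simpa using hint
  have hmoment (n : ℕ) : ∫ x in Icc 0 1, x ^ n • g (-Real.log x) = 0 := by
    rw [integral_Icc_eq_integral_Ioo, ← image_exp_neg_Ioi_zero,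
      integral_image_eq_integral_deriv_smul_of_antitoneOn measurableSet_Ioi hderiv hanti,
      ← hzero n]
    refine setIntegral_congr_fun measurableSet_Ioi fun t _ ↦ ?_
    simp only [neg_neg, Real.log_exp, smul_smul, ← Real.exp_nat_mul, ← Real.exp_add]
    ring_nf
  intro t ht
  have hexp : Real.exp (-t) ∈ Ioo 0 1 := image_exp_neg_Ioi_zero ▸ mem_image_of_mem _ ht
  have hgt : ContinuousAt g (-Real.log (Real.exp (-t))) := by
    simpa using hcont.continuousAt (Ioi_mem_nhds ht)
  simpa using eq_zero_of_integral_pow_smul_eq_zero hint' hmoment hexp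
    (hgt.comp (f := fun x ↦ -Real.log x) (Real.continuousAt_log hexp.1.ne').neg)

theorem eqOn_Ioi_of_laplace_eq [CompleteSpace E] {f g : ℝ → E}
    (hf : ContinuousOn f (Ioi 0)) (hg : ContinuousOn g (Ioi 0))
    (hf_int : ∀ p > 0, IntegrableOn (fun t ↦ Real.exp (-p * t) • f t) (Ioi 0))
    (hg_int : ∀ p > 0, IntegrableOn (fun t ↦ Real.exp (-p * t) • g t) (Ioi 0))
    (heq : ∀ p > 0, ∫ t in Ioi 0, Real.exp (-p * t) • f t =
      ∫ t in Ioi 0, Real.exp (-p * t) • g t) :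
    EqOn f g (Ioi 0) := by
  have hzero := eqOn_zero_of_integral_exp_neg_smul_eq_zero (hf.sub hg)
    (by simpa [smul_sub, Pi.sub_def] using (hf_int 1 one_pos).sub (hg_int 1 one_pos))
    (fun n ↦ by
      have hn : (0 : ℝ) < n + 1 := n.cast_add_one_pos
      simp only [Pi.sub_apply, smul_sub]
      rw [integral_sub (hf_int _ hn) (hg_int _ hn), heq _ hn, sub_self])
  exact fun t ht ↦ sub_eq_zero.mp (hzero ht)

end Lerch

/-! ### Laplace and Stieltjes transforms of a positive measure -/

theorem exp_neg_mul_le_inv_mul_inv_add_inv {t x : ℝ} (ht : 0 < t) (hx : 0 ≤ x) :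
    Real.exp (-t * x) ≤ t⁻¹ * (x + t⁻¹)⁻¹ := by
  have h : t⁻¹ * (x + t⁻¹)⁻¹ = (t * x + 1)⁻¹ := by field_simp
  rw [h, neg_mul, Real.exp_neg]
  exact inv_anti₀ (by positivity) (Real.add_one_le_exp _)

theorem mul_exp_neg_mul_le_inv_sq_mul_inv_add_inv {t x : ℝ} (ht : 0 < t) (hx : 0 ≤ x) :
    x * Real.exp (-t * x) ≤ t⁻¹ ^ 2 * (x + t⁻¹)⁻¹ := by
  have h : t⁻¹ ^ 2 * (x + t⁻¹)⁻¹ = t⁻¹ * (t * x + 1)⁻¹ := by field_simp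
  have hu : 0 ≤ t * x := by positivity
  -- `u (u + 1) ≤ 1 + u + u² / 2 + u³ / 6` for `u ≥ 0`
  have hexp : t * x * (t * x + 1) ≤ Real.exp (t * x) := by
    have := Real.sum_le_exp_of_nonneg hu 4
    simp only [Finset.sum_range_succ, Finset.sum_range_zero, Nat.factorial] at this
    norm_num at this
    nlinarith [mul_nonneg hu (sq_nonneg (t * x - 3 / 2)), sq_nonneg (t * x)]
  rw [h, neg_mul, Real.exp_neg]
  field_simp
  simpa only [mul_comm t x] using hexp

section LaplaceTransform

variable {Ω : Type*} {mΩ : MeasurableSpace Ω} {X : Ω → ℝ} {ν : Measure Ω}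

theorem Iio_zero_subset_interior_integrableExpSet (hX : AEMeasurable X ν)
    (hX0 : ∀ᵐ ω ∂ν, 0 ≤ X ω) (hint : ∀ p > 0, Integrable (fun ω ↦ (X ω + p)⁻¹) ν) :
    Iio 0 ⊆ interior (integrableExpSet X ν) := by
  refine isOpen_Iio.subset_interior_iff.mpr fun t ht ↦ ?_
  have ht' : 0 < -t := neg_pos.mpr ht
  refine ((hint _ (inv_pos.mpr ht')).const_mul (-t)⁻¹).mono'
    (Real.measurable_exp.comp_aemeasurable (hX.const_mul t)).aestronglyMeasurable ?_
  filter_upwards [hX0] with ω hω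
  simpa using exp_neg_mul_le_inv_mul_inv_add_inv ht' hω

variable {t : ℝ}

theorem mgf_neg_le_integral_inv_add (hX : AEMeasurable X ν) (hX0 : ∀ᵐ ω ∂ν, 0 ≤ X ω)
    (hint : ∀ p > 0, Integrable (fun ω ↦ (X ω + p)⁻¹) ν) (ht : 0 < t) :
    mgf X ν (-t) ≤ t⁻¹ * ∫ ω, (X ω + t⁻¹)⁻¹ ∂ν := by
  have hexp : -t ∈ integrableExpSet X ν := interior_subset
    (Iio_zero_subset_interior_integrableExpSet hX hX0 hint (neg_lt_zero.mpr ht))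
  rw [mgf, ← integral_const_mul]
  refine integral_mono_ae hexp ((hint _ (inv_pos.mpr ht)).const_mul _) ?_
  filter_upwards [hX0] with ω hω using exp_neg_mul_le_inv_mul_inv_add_inv ht hω

theorem abs_deriv_mgf_neg_le_integral_inv_add (hX : AEMeasurable X ν) (hX0 : ∀ᵐ ω ∂ν, 0 ≤ X ω)
    (hint : ∀ p > 0, Integrable (fun ω ↦ (X ω + p)⁻¹) ν) (ht : 0 < t) :
    |deriv (mgf X ν) (-t)| ≤ t⁻¹ ^ 2 * ∫ ω, (X ω + t⁻¹)⁻¹ ∂ν := by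
  rw [deriv_mgf (Iio_zero_subset_interior_integrableExpSet hX hX0 hint (neg_lt_zero.mpr ht)),
    ← integral_const_mul, ← Real.norm_eq_abs]
  refine norm_integral_le_of_norm_le ((hint _ (inv_pos.mpr ht)).const_mul _) ?_
  filter_upwards [hX0] with ω hω
  rw [Real.norm_of_nonneg (by positivity)]
  exact mul_exp_neg_mul_le_inv_sq_mul_inv_add_inv ht hω

theorem integral_exp_mul_mgf_neg [SFinite ν] (hX : AEMeasurable X ν) (hX0 : ∀ᵐ ω ∂ν, 0 ≤ X ω)
    {p : ℝ} (hp : 0 < p) (hint : Integrable (fun ω ↦ (X ω + p)⁻¹) ν) :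
    IntegrableOn (fun t ↦ Real.exp (-p * t) * mgf X ν (-t)) (Ioi 0) ∧
      ∫ t in Ioi 0, Real.exp (-p * t) * mgf X ν (-t) = ∫ ω, (X ω + p)⁻¹ ∂ν := by
  let f : ℝ → Ω → ℝ := fun t ω ↦ Real.exp (-(X ω + p) * t)
  have hf (t : ℝ) : Real.exp (-p * t) * mgf X ν (-t) = ∫ ω, f t ω ∂ν := by
    rw [mgf, ← integral_const_mul]
    refine integral_congr_ae (.of_forall fun ω ↦ ?_)
    simp only [f, ← Real.exp_add]
    ring_nf
  have hf_int : ∀ᵐ ω ∂ν, ∫ t in Ioi 0, f t ω = (X ω + p)⁻¹ := by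
    filter_upwards [hX0] with ω hω
    rw [integral_exp_mul_Ioi (by linarith), mul_zero, Real.exp_zero, neg_div_neg_eq, one_div]
  have hmeas : AEStronglyMeasurable (Function.uncurry f) ((volume.restrict (Ioi 0)).prod ν) :=
    (Real.measurable_exp.comp_aemeasurable
      (((hX.comp_snd).add_const p).neg.mul measurable_fst.aemeasurable)).aestronglyMeasurable
  have hprod : Integrable (Function.uncurry f) ((volume.restrict (Ioi 0)).prod ν) := by
    refine (integrable_prod_iff' hmeas).mpr ⟨?_, hint.congr ?_⟩
    · filter_upwards [hX0] with ω hω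
      exact integrableOn_exp_mul_Ioi (a := -(X ω + p)) (by linarith) 0
    · filter_upwards [hf_int] with ω hω
      simpa [f] using hω.symm
  simp only [hf]
  exact ⟨hprod.integral_prod_left,
    (integral_integral_swap hprod).trans (integral_congr_ae hf_int)⟩

end LaplaceTransform

/-! ### Stieltjes representation by contour integration -/

/-- The closed strip `|Im z| ≤ π`: the complex plane cut along `(-∞, 0]`, in the coordinate
`z = log p`, including both edges of the cut. -/
def logStrip : Set ℂ := {z | |z.im| ≤ π}

theorem logStrip_mem_nhds_ofReal (s : ℝ) : logStrip ∈ 𝓝 (s : ℂ) :=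
  (Complex.continuous_im.abs.tendsto' (s : ℂ) 0 (by simp)).eventually_le_const Real.pi_pos

theorem exp_ne_exp_ofReal_of_mem_logStrip {z : ℂ} {s : ℝ} (hz : z ∈ logStrip) (hzs : z ≠ s) :
    Complex.exp z ≠ Complex.exp s := by
  intro h
  obtain ⟨n, rfl⟩ := Complex.exp_eq_exp_iff_exists_int.mp h
  have hn : |(n : ℝ)| < 1 := by
    have : |(n : ℝ)| * (2 * π) ≤ π := by
      simpa [logStrip, abs_mul, abs_of_pos Real.pi_pos] using hz
    nlinarith [Real.pi_pos]
  obtain rfl : n = 0 := Int.abs_lt_one_iff.mp (by exact_mod_cast hn)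
  simp at hzs

theorem tendsto_integral_re_add_mul_I {f : ℂ → ℂ} {l : Filter ℝ} [l.IsCountablyGenerated]
    {a b : ℝ} {c : ℂ} (hf : ContinuousOn f {z | z.im ∈ uIcc a b})
    (hlim : Tendsto f (comap Complex.re l ⊓ 𝓟 {z | z.im ∈ uIcc a b}) (𝓝 c)) :
    Tendsto (fun R : ℝ ↦ ∫ y in a..b, f (R + y * Complex.I)) l (𝓝 ((b - a) * c)) := by
  have hunif : TendstoUniformlyOn (fun (R y : ℝ) ↦ f (R + y * Complex.I)) (fun _ ↦ c) l
      (uIcc a b) := by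
    rw [← tendsto_prod_principal_iff]
    refine hlim.comp (tendsto_inf.mpr ⟨tendsto_comap_iff.mpr ?_, tendsto_principal.mpr ?_⟩)
    · simpa [Function.comp_def] using tendsto_fst
    · filter_upwards [prod_mem_prod univ_mem (mem_principal_self _)] with p hp
      simpa using hp.2
  have hcont (R : ℝ) : ContinuousOn (fun y : ℝ ↦ f (R + y * Complex.I)) (uIcc a b) :=
    hf.comp (by fun_prop) fun y hy ↦ by simpa using hy
  simpa using hunif.tendsto_intervalIntegral_of_continuousOn (μ := volume) (.of_forall hcont)

section Stieltjes

variable {G : ℂ → ℂ} {s : ℝ} {z : ℂ}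

/-- The function `(G z - G s) * exp z / (exp z - exp s)`, whose contour integrals over rectangles in
the strip yield the Stieltjes representation of `G`. Subtracting `G s` makes the singularity at
`z = s` removable; dividing slopes fills it in. -/
noncomputable def stieltjesIntegrand (G : ℂ → ℂ) (s : ℝ) (z : ℂ) : ℂ :=
  dslope G s z * (Complex.exp z / dslope Complex.exp s z)

theorem stieltjesIntegrand_of_ne (hz : z ∈ logStrip) (hzs : z ≠ s) :
    stieltjesIntegrand G s z =
      (G z - G s) * (Complex.exp z / (Complex.exp z - Complex.exp s)) := by
  have hexp := sub_ne_zero.mpr (exp_ne_exp_ofReal_of_mem_logStrip hz hzs)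
  have hsub := sub_ne_zero.mpr hzs
  rw [stieltjesIntegrand, dslope_of_ne _ hzs, dslope_of_ne _ hzs, slope_def_field,
    slope_def_field]
  field_simp

theorem differentiableOn_stieltjesIntegrand (hG : DifferentiableOn ℂ G logStrip) (s : ℝ) :
    DifferentiableOn ℂ (stieltjesIntegrand G s) logStrip := by
  have hexp : DifferentiableOn ℂ (dslope Complex.exp s) logStrip :=
    (Complex.differentiableOn_dslope (logStrip_mem_nhds_ofReal s)).mpr
      Complex.differentiable_exp.differentiableOn
  refine ((Complex.differentiableOn_dslope (logStrip_mem_nhds_ofReal s)).mpr hG).mul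
    (Complex.differentiable_exp.differentiableOn.div hexp fun z hz ↦ ?_)
  rcases eq_or_ne z s with rfl | hzs
  · simp [dslope_same]
  · rw [dslope_of_ne _ hzs, slope_def_field]
    exact div_ne_zero (sub_ne_zero.mpr (exp_ne_exp_ofReal_of_mem_logStrip hz hzs))
      (sub_ne_zero.mpr hzs)

theorem tendsto_stieltjesIntegrand_atTop
    (hG : Tendsto G (comap Complex.re atTop ⊓ 𝓟 logStrip) (𝓝 0)) (s : ℝ) :
    Tendsto (stieltjesIntegrand G s) (comap Complex.re atTop ⊓ 𝓟 logStrip) (𝓝 (-G s)) := by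
  have hexp : Tendsto (fun z ↦ Complex.exp (-z)) (comap Complex.re atTop) (𝓝 0) :=
    Complex.tendsto_exp_comap_re_atBot.comp
      (tendsto_comap_iff.mpr (by simpa [Function.comp_def] using tendsto_comap))
  have hlim : Tendsto (fun z ↦ (G z - G s) * (1 - Complex.exp s * Complex.exp (-z))⁻¹)
      (comap Complex.re atTop ⊓ 𝓟 logStrip) (𝓝 (-G s)) := by
    simpa using (hG.sub_const (G s)).mul
      (((hexp.mono_left inf_le_left).const_mul (Complex.exp s)).const_sub 1 |>.inv₀ (by simp))
  refine hlim.congr' ?_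
  filter_upwards [mem_inf_of_right (mem_principal_self _),
    mem_inf_of_left (preimage_mem_comap (Ioi_mem_atTop s))] with z hz hsz
  rw [stieltjesIntegrand_of_ne hz (by rintro rfl; simp at hsz), Complex.exp_neg]
  congr 1
  field_simp

theorem tendsto_stieltjesIntegrand_atBot
    (hG : Tendsto (fun z ↦ Complex.exp z * G z) (comap Complex.re atBot ⊓ 𝓟 logStrip) (𝓝 0))
    (s : ℝ) :
    Tendsto (stieltjesIntegrand G s) (comap Complex.re atBot ⊓ 𝓟 logStrip) (𝓝 0) := by
  have hexp : Tendsto Complex.exp (comap Complex.re atBot ⊓ 𝓟 logStrip) (𝓝 0) :=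
    Complex.tendsto_exp_comap_re_atBot.mono_left inf_le_left
  have hlim : Tendsto (fun z ↦ (Complex.exp z * G z - Complex.exp z * G s) /
      (Complex.exp z - Complex.exp s)) (comap Complex.re atBot ⊓ 𝓟 logStrip) (𝓝 0) := by
    simpa [Pi.div_def] using
      (hG.sub (hexp.mul_const (G s))).div (hexp.sub_const (Complex.exp s)) (by simp)
  refine hlim.congr' ?_
  filter_upwards [mem_inf_of_right (mem_principal_self _),
    mem_inf_of_left (preimage_mem_comap (Iio_mem_atBot s))] with z hz hsz
  rw [stieltjesIntegrand_of_ne hz (by rintro rfl; simp at hsz)]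
  ring

/-- The density `-Im G(x + iπ) / π`, with respect to `exp x dx / (exp x + exp s)`, of the Stieltjes
representation of `G`; up to a factor `-2πi` it is the jump of `G` across the cut. -/
noncomputable def stieltjesDensity (G : ℂ → ℂ) (x : ℝ) : ℝ :=
  -(G (x + π * Complex.I)).im / π

theorem stieltjesIntegrand_of_exp_eq_neg {x : ℝ} (hz : z ∈ logStrip)
    (hexp : Complex.exp z = -Complex.exp x) :
    stieltjesIntegrand G s z =
      (G z - G s) * (Real.exp x / (Real.exp x + Real.exp s) : ℝ) := by
  have hzs : z ≠ s := by
    rintro rfl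
    have : Real.exp s = -Real.exp x := by exact_mod_cast hexp
    linarith [Real.exp_pos s, Real.exp_pos x]
  rw [stieltjesIntegrand_of_ne hz hzs, hexp]
  push_cast
  rw [← neg_add', neg_div_neg_eq]

theorem stieltjesIntegrand_sub_pi_sub_add_pi (hconj : ∀ z, G (conj z) = conj (G z)) (s x : ℝ) :
    stieltjesIntegrand G s (x - π * Complex.I) -
      stieltjesIntegrand G s (x + π * Complex.I) =
        2 * π * Complex.I *
          (stieltjesDensity G x * (Real.exp x / (Real.exp x + Real.exp s)) : ℝ) := by
  have hG : G (x - π * Complex.I) = conj (G (x + π * Complex.I)) := by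
    simp [← hconj, sub_eq_add_neg]
  have hjump : G (x - π * Complex.I) - G (x + π * Complex.I) =
      2 * π * Complex.I * stieltjesDensity G x := by
    have hpi : (π : ℂ) ≠ 0 := by exact_mod_cast Real.pi_ne_zero
    rw [hG, ← neg_sub, Complex.sub_conj, stieltjesDensity]
    push_cast
    field_simp
  rw [stieltjesIntegrand_of_exp_eq_neg (by simp [logStrip, abs_of_pos Real.pi_pos])
      (Complex.exp_antiperiodic.sub_eq x),
    stieltjesIntegrand_of_exp_eq_neg (by simp [logStrip, abs_of_pos Real.pi_pos])
      (Complex.exp_antiperiodic x), ← sub_mul, sub_sub_sub_cancel_right, hjump]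
  push_cast
  ring

theorem two_pi_mul_integral_stieltjesDensity_mul (hG : DifferentiableOn ℂ G logStrip)
    (hconj : ∀ z, G (conj z) = conj (G z)) (s a b : ℝ) :
    2 * π *
        (∫ x in a..b, stieltjesDensity G x * (Real.exp x / (Real.exp x + Real.exp s)) : ℝ) =
      (∫ y in -π..π, stieltjesIntegrand G s (a + y * Complex.I)) -
        ∫ y in -π..π, stieltjesIntegrand G s (b + y * Complex.I) := by
  have hH := differentiableOn_stieltjesIntegrand hG s
  have hint (θ : ℝ) (hθ : |θ| ≤ π) : IntervalIntegrable
      (fun x : ℝ ↦ stieltjesIntegrand G s (x + θ * Complex.I)) volume a b :=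
    (hH.continuousOn.comp (by fun_prop) fun x _ ↦ by simpa [logStrip]).intervalIntegrable
  have hrect := Complex.integral_boundary_rect_eq_zero_of_differentiableOn
    (stieltjesIntegrand G s) (a + (-π : ℝ) * Complex.I) (b + π * Complex.I)
    (hH.mono fun z hz ↦ by
      simpa [logStrip, abs_le, Real.pi_pos.le, Complex.mem_reProdIm, uIcc_of_le] using hz.2)
  simp only [Complex.add_re, Complex.add_im, Complex.re_ofReal_mul, Complex.im_ofReal_mul,
    Complex.ofReal_re, Complex.ofReal_im, Complex.I_re, Complex.I_im, mul_zero, mul_one, add_zero,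
    zero_add, smul_eq_mul] at hrect
  rw [← intervalIntegral.integral_sub (hint (-π) (by simp [abs_of_pos Real.pi_pos]))
    (hint π (by simp [abs_of_pos Real.pi_pos]))] at hrect
  simp only [Complex.ofReal_neg, neg_mul, ← sub_eq_add_neg,
    stieltjesIntegrand_sub_pi_sub_add_pi hconj, intervalIntegral.integral_const_mul,
    intervalIntegral.integral_ofReal] at hrect
  exact mul_left_cancel₀ Complex.I_ne_zero (by linear_combination hrect)

/-- The conditions on `G z = f (exp z)` under which the contour argument represents `f` as a
Stieltjes transform of a positive measure: `G` is real and holomorphic on the strip, `f p → 0` as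
`p → ∞`, `p f(p) → 0` as `p → 0`, and `Im f ≤ 0` on the upper edge of the cut. -/
structure IsLogStieltjes (G : ℂ → ℂ) : Prop where
  differentiableOn : DifferentiableOn ℂ G logStrip
  map_conj (z : ℂ) : G (conj z) = conj (G z)
  tendsto_atTop : Tendsto G (comap Complex.re atTop ⊓ 𝓟 logStrip) (𝓝 0)
  tendsto_exp_mul_atBot :
    Tendsto (fun z ↦ Complex.exp z * G z) (comap Complex.re atBot ⊓ 𝓟 logStrip) (𝓝 0)
  im_nonpos (x : ℝ) : (G (x + π * Complex.I)).im ≤ 0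

namespace IsLogStieltjes

theorem stieltjesDensity_nonneg (h : IsLogStieltjes G) (x : ℝ) : 0 ≤ stieltjesDensity G x :=
  div_nonneg (neg_nonneg.mpr (h.im_nonpos x)) Real.pi_pos.le

theorem continuous_stieltjesDensity (h : IsLogStieltjes G) : Continuous (stieltjesDensity G) :=
  (Complex.continuous_im.comp (h.differentiableOn.continuousOn.comp_continuous (by fun_prop)
    fun x ↦ by simp [logStrip, abs_of_pos Real.pi_pos])).neg.div_const _

theorem tendsto_integral_stieltjesDensity_mul (h : IsLogStieltjes G) (s : ℝ) :
    Tendsto (fun R ↦ ∫ x in -R..R,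
      stieltjesDensity G x * (Real.exp x / (Real.exp x + Real.exp s))) atTop (𝓝 (G s).re) := by
  have hstrip : {z : ℂ | z.im ∈ uIcc (-π) π} = logStrip := by
    ext z
    simp [logStrip, abs_le, Real.pi_pos.le, uIcc_of_le]
  have hcont := (differentiableOn_stieltjesIntegrand h.differentiableOn s).continuousOn
  have hright := tendsto_integral_re_add_mul_I (hstrip ▸ hcont)
    (hstrip ▸ tendsto_stieltjesIntegrand_atTop h.tendsto_atTop s)
  have hleft := (tendsto_integral_re_add_mul_I (hstrip ▸ hcont)
    (hstrip ▸ tendsto_stieltjesIntegrand_atBot h.tendsto_exp_mul_atBot s)).comp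
      tendsto_neg_atTop_atBot
  have hlim : Tendsto (fun R ↦ 2 * π * ((∫ x in -R..R,
      stieltjesDensity G x * (Real.exp x / (Real.exp x + Real.exp s)) : ℝ) : ℂ)) atTop
      (𝓝 (2 * π * G s)) := by
    simp only [two_pi_mul_integral_stieltjesDensity_mul h.differentiableOn h.map_conj]
    convert hleft.sub hright using 2
    · simp only [Function.comp_apply, Complex.ofReal_neg]
    · push_cast
      ring
  have hpi : (2 * π : ℂ) ≠ 0 := by simp [Real.pi_ne_zero]
  simpa only [inv_mul_cancel_left₀ hpi, Function.comp_def, Complex.ofReal_re] using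
    (Complex.continuous_re.tendsto _).comp (hlim.const_mul (2 * π : ℂ)⁻¹)

theorem integral_stieltjesDensity_mul (h : IsLogStieltjes G) (s : ℝ) :
    Integrable (fun x ↦ stieltjesDensity G x * (Real.exp x / (Real.exp x + Real.exp s))) ∧
      ∫ x, stieltjesDensity G x * (Real.exp x / (Real.exp x + Real.exp s)) = (G s).re := by
  have hlim := h.tendsto_integral_stieltjesDensity_mul s
  have hcont : Continuous fun x ↦
      stieltjesDensity G x * (Real.exp x / (Real.exp x + Real.exp s)) :=
    h.continuous_stieltjesDensity.mul
      (Real.continuous_exp.div (by fun_prop) fun x ↦ by positivity)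
  have hnorm (x : ℝ) : ‖stieltjesDensity G x * (Real.exp x / (Real.exp x + Real.exp s))‖ =
      stieltjesDensity G x * (Real.exp x / (Real.exp x + Real.exp s)) :=
    Real.norm_of_nonneg (mul_nonneg (h.stieltjesDensity_nonneg x) (by positivity))
  have hint := integrable_of_intervalIntegral_norm_tendsto (μ := volume) _
    (fun _ ↦ hcont.integrableOn_Ioc) tendsto_neg_atTop_atBot tendsto_id (by simpa [hnorm])
  exact ⟨hint, tendsto_nhds_unique (intervalIntegral_tendsto_integral hint
    tendsto_neg_atTop_atBot tendsto_id) hlim⟩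

theorem exists_measure_integral_inv_exp_add_exp (h : IsLogStieltjes G) :
    ∃ ν : Measure ℝ, SFinite ν ∧ ∀ s : ℝ,
      Integrable (fun x ↦ (Real.exp x + Real.exp s)⁻¹) ν ∧
        ∫ x, (Real.exp x + Real.exp s)⁻¹ ∂ν = (G s).re := by
  let d (x : ℝ) := ENNReal.ofReal (stieltjesDensity G x * Real.exp x)
  have hmeas : Measurable d :=
    (h.continuous_stieltjesDensity.mul Real.continuous_exp).measurable.ennreal_ofReal
  have htop : ∀ᵐ x, d x < ⊤ := .of_forall fun x ↦ ENNReal.ofReal_lt_top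
  have hsmul (s x : ℝ) : (d x).toReal • (Real.exp x + Real.exp s)⁻¹ =
      stieltjesDensity G x * (Real.exp x / (Real.exp x + Real.exp s)) := by
    rw [ENNReal.toReal_ofReal (mul_nonneg (h.stieltjesDensity_nonneg x) (Real.exp_pos x).le),
      smul_eq_mul, mul_assoc, div_eq_mul_inv]
  refine ⟨volume.withDensity d, inferInstance, fun s ↦ ?_⟩
  rw [integrable_withDensity_iff_integrable_smul' hmeas htop,
    integral_withDensity_eq_integral_toReal_smul hmeas htop]
  simpa only [hsmul] using h.integral_stieltjesDensity_mul s

theorem bounds_of_laplace_eq (h : IsLogStieltjes G) {κ : ℝ → ℝ}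
    (hκ : ContinuousOn κ (Ioi 0))
    (hlap : ∀ p : ℝ, 0 < p → IntegrableOn (fun t ↦ Real.exp (-p * t) * κ t) (Ioi 0) ∧
      ∫ t in Ioi 0, Real.exp (-p * t) * κ t = (G (Real.log p)).re) :
    DifferentiableOn ℝ κ (Ioi 0) ∧ ∀ t, 0 < t →
      κ t ≤ t⁻¹ * (G (Real.log t⁻¹)).re ∧ |deriv κ t| ≤ t⁻¹ ^ 2 * (G (Real.log t⁻¹)).re := by
  obtain ⟨ν, _, hν⟩ := h.exists_measure_integral_inv_exp_add_exp
  have hint (p : ℝ) (hp : p > 0) : Integrable (fun x ↦ (Real.exp x + p)⁻¹) ν := by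
    simpa [Real.exp_log hp] using (hν (Real.log p)).1
  have hG {p : ℝ} (hp : 0 < p) : ∫ x, (Real.exp x + p)⁻¹ ∂ν = (G (Real.log p)).re := by
    simpa only [Real.exp_log hp] using (hν (Real.log p)).2
  have hexp : AEMeasurable Real.exp ν := Real.measurable_exp.aemeasurable
  have hexp0 : ∀ᵐ x ∂ν, 0 ≤ Real.exp x := .of_forall fun x ↦ (Real.exp_pos x).le
  have hmgf : DifferentiableOn ℝ (fun t ↦ mgf Real.exp ν (-t)) (Ioi 0) :=
    differentiableOn_mgf.comp differentiable_neg.differentiableOn fun t ht ↦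
      Iio_zero_subset_interior_integrableExpSet hexp hexp0 hint
        (mem_Iio.mpr (neg_lt_zero.mpr ht))
  have hlapν (p : ℝ) (hp : p > 0) := integral_exp_mul_mgf_neg hexp hexp0 hp (hint p hp)
  have heq : EqOn κ (fun t ↦ mgf Real.exp ν (-t)) (Ioi 0) :=
    eqOn_Ioi_of_laplace_eq hκ hmgf.continuousOn (fun p hp ↦ (hlap p hp).1)
      (fun p hp ↦ (hlapν p hp).1)
      fun p hp ↦ ((hlap p hp).2.trans (hG hp).symm).trans (hlapν p hp).2.symm
  refine ⟨hmgf.congr heq, fun t ht ↦ ?_⟩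
  have hderiv : deriv κ t = -deriv (mgf Real.exp ν) (-t) := by
    rw [(heq.eventuallyEq_of_mem (Ioi_mem_nhds ht)).deriv_eq, deriv_comp_neg]
  rw [heq ht, hderiv, abs_neg, ← hG (inv_pos.mpr ht)]
  exact ⟨mgf_neg_le_integral_inv_add hexp hexp0 hint ht,
    abs_deriv_mgf_neg_le_integral_inv_add hexp hexp0 hint ht⟩

end IsLogStieltjes

end Stieltjes

/-! ### Exponential integrals of measures on the unit interval -/

section UnitIntervalMeasure

theorem sin_pi_mul_nonneg {α : ℝ} (hα : α ∈ Icc 0 1) : 0 ≤ Real.sin (π * α) :=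
  Real.sin_nonneg_of_mem_Icc ⟨mul_nonneg Real.pi_pos.le hα.1,
    mul_le_of_le_one_right Real.pi_pos.le hα.2⟩

theorem sin_pi_mul_pos {α : ℝ} (hα : α ∈ Ioo 0 1) : 0 < Real.sin (π * α) :=
  Real.sin_pos_of_mem_Ioo ⟨mul_pos Real.pi_pos hα.1, mul_lt_of_lt_one_right Real.pi_pos hα.2⟩

theorem sin_pi_mul_le_cos_mul_sub_half {y α : ℝ} (hy : |y| ≤ π) (hα : α ∈ Icc 0 1) :
    Real.sin (π * α) ≤ Real.cos (y * (α - 1 / 2)) := by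
  have habs : |α - 1 / 2| ≤ 1 / 2 := abs_le.mpr ⟨by linarith [hα.1], by linarith [hα.2]⟩
  calc Real.sin (π * α)
    _ = Real.cos |π * (α - 1 / 2)| := by
      rw [Real.cos_abs, ← Real.cos_pi_div_two_sub, ← Real.cos_neg]
      ring_nf
    _ ≤ Real.cos |y * (α - 1 / 2)| := by
      rw [abs_mul, abs_mul, abs_of_pos Real.pi_pos]
      refine Real.cos_le_cos_of_nonneg_of_le_pi (by positivity) ?_ (by gcongr)
      nlinarith [Real.pi_pos]
    _ = Real.cos (y * (α - 1 / 2)) := Real.cos_abs _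

variable {ρ : Measure ℝ} [IsFiniteMeasure ρ]

theorem integrable_of_continuous_of_ae_mem_Icc {E : Type*} [NormedAddCommGroup E] {f : ℝ → E}
    {a b : ℝ} (hρ : ∀ᵐ α ∂ρ, α ∈ Icc a b) (hf : Continuous f) : Integrable f ρ := by
  rw [← Measure.restrict_eq_self_of_ae_mem hρ]
  exact hf.integrableOn_Icc

theorem complexMGF_conj {Ω : Type*} {mΩ : MeasurableSpace Ω} (X : Ω → ℝ) (μ : Measure Ω) (z : ℂ) :
    complexMGF X μ (conj z) = conj (complexMGF X μ z) := by
  simp [complexMGF, ← integral_conj, ← Complex.exp_conj]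

theorem integral_mul_sin_pi_mul_mono (hρ : ∀ᵐ α ∂ρ, α ∈ Icc 0 1) {f g : ℝ → ℝ}
    (hf : Continuous f) (hg : Continuous g) (hfg : ∀ α ∈ Icc 0 1, f α ≤ g α) :
    ∫ α, f α * Real.sin (π * α) ∂ρ ≤ ∫ α, g α * Real.sin (π * α) ∂ρ := by
  refine integral_mono_ae (integrable_of_continuous_of_ae_mem_Icc hρ (by fun_prop))
    (integrable_of_continuous_of_ae_mem_Icc hρ (by fun_prop)) ?_
  filter_upwards [hρ] with α hα
  exact mul_le_mul_of_nonneg_right (hfg α hα) (sin_pi_mul_nonneg hα)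

theorem integral_mul_sin_pi_mul_pos (hρ : ∀ᵐ α ∂ρ, α ∈ Icc 0 1) (hρ0 : ρ (Ioo 0 1) ≠ 0)
    {f : ℝ → ℝ} (hf : Continuous f) (hpos : ∀ α ∈ Ioo 0 1, 0 < f α) :
    0 < ∫ α, f α * Real.sin (π * α) ∂ρ := by
  have hpos' (α : ℝ) (hα : α ∈ Ioo 0 1) : 0 < f α * Real.sin (π * α) :=
    mul_pos (hpos α hα) (sin_pi_mul_pos hα)
  have hnonneg : 0 ≤ᵐ[ρ] fun α ↦ f α * Real.sin (π * α) := by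
    filter_upwards [hρ] with α hα
    rcases eq_endpoints_or_mem_Ioo_of_mem_Icc hα with rfl | rfl | hα
    · simp
    · simp
    · exact (hpos' α hα).le
  rw [integral_pos_iff_support_of_nonneg_ae hnonneg
    (integrable_of_continuous_of_ae_mem_Icc hρ (by fun_prop))]
  exact (pos_iff_ne_zero.mpr hρ0).trans_le (measure_mono fun α hα ↦ (hpos' α hα).ne')

theorem im_complexMGF_id_add_pi_mul_I (hρ : ∀ᵐ α ∂ρ, α ∈ Icc 0 1) (x : ℝ) :
    (complexMGF id ρ (x + π * Complex.I)).im = ∫ α, Real.exp (x * α) * Real.sin (π * α) ∂ρ := by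
  have hint := integrable_of_continuous_of_ae_mem_Icc hρ
    (f := fun α : ℝ ↦ Complex.exp ((x + π * Complex.I) * α)) (by fun_prop)
  simpa [complexMGF, Complex.exp_im] using (integral_im hint).symm

theorem integral_exp_mul_sin_le_norm_complexMGF (hρ : ∀ᵐ α ∂ρ, α ∈ Icc 0 1) {z : ℂ}
    (hz : z ∈ logStrip) :
    ∫ α, Real.exp (z.re * α) * Real.sin (π * α) ∂ρ ≤ ‖complexMGF id ρ z‖ := by
  -- Rotating by `-Im z / 2` moves all phases `α Im z` into `[-π/2, π/2]`.
  let u : ℂ := Complex.exp ((-(z.im / 2) : ℝ) * Complex.I)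
  have hrot : (u * complexMGF id ρ z).re =
      ∫ α, Real.exp (z.re * α) * Real.cos (z.im * (α - 1 / 2)) ∂ρ := by
    have hint := integrable_of_continuous_of_ae_mem_Icc hρ
      (f := fun α : ℝ ↦ u * Complex.exp (z * α)) (by fun_prop)
    rw [complexMGF, ← integral_const_mul]
    refine (integral_re hint).symm.trans (integral_congr_ae (.of_forall fun α ↦ ?_))
    simp [u, ← Complex.exp_add, Complex.exp_re]
    ring_nf
  calc ∫ α, Real.exp (z.re * α) * Real.sin (π * α) ∂ρ
    _ ≤ ∫ α, Real.exp (z.re * α) * Real.cos (z.im * (α - 1 / 2)) ∂ρ := by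
      refine integral_mono_ae (integrable_of_continuous_of_ae_mem_Icc hρ (by fun_prop))
        (integrable_of_continuous_of_ae_mem_Icc hρ (by fun_prop)) ?_
      filter_upwards [hρ] with α hα
      gcongr
      exact sin_pi_mul_le_cos_mul_sub_half hz hα
    _ = (u * complexMGF id ρ z).re := hrot.symm
    _ ≤ ‖u * complexMGF id ρ z‖ := Complex.re_le_norm _
    _ = ‖complexMGF id ρ z‖ := by rw [norm_mul, Complex.norm_exp_ofReal_mul_I, one_mul]

theorem differentiable_complexMGF_id (hρ : ∀ᵐ α ∂ρ, α ∈ Icc 0 1) :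
    Differentiable ℂ (complexMGF id ρ) := by
  have huniv : integrableExpSet id ρ = univ := eq_univ_of_forall fun t ↦
    integrable_of_continuous_of_ae_mem_Icc hρ (by fun_prop)
  simpa [huniv, differentiableOn_univ] using differentiableOn_complexMGF (X := id) (μ := ρ)

theorem complexMGF_id_ne_zero (hρ : ∀ᵐ α ∂ρ, α ∈ Icc 0 1) (hρ0 : ρ (Ioo 0 1) ≠ 0) {z : ℂ}
    (hz : z ∈ logStrip) : complexMGF id ρ z ≠ 0 :=
  norm_pos_iff.mp <| (integral_mul_sin_pi_mul_pos hρ hρ0 (by fun_prop)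
    fun α _ ↦ Real.exp_pos (z.re * α)).trans_le (integral_exp_mul_sin_le_norm_complexMGF hρ hz)

theorem re_mul_integral_mul_sin_le_norm_complexMGF (hρ : ∀ᵐ α ∂ρ, α ∈ Icc 0 1) {z : ℂ}
    (hz : z ∈ logStrip) : z.re * ∫ α, α * Real.sin (π * α) ∂ρ ≤ ‖complexMGF id ρ z‖ := by
  refine le_trans ?_ (integral_exp_mul_sin_le_norm_complexMGF hρ hz)
  simp only [← integral_const_mul, ← mul_assoc]
  refine integral_mul_sin_pi_mul_mono hρ (by fun_prop) (by fun_prop) fun α _ ↦ ?_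
  linarith [Real.add_one_le_exp (z.re * α)]

theorem neg_re_mul_integral_mul_sin_le_norm_exp_neg_mul_complexMGF
    (hρ : ∀ᵐ α ∂ρ, α ∈ Icc 0 1) {z : ℂ} (hz : z ∈ logStrip) :
    -z.re * ∫ α, (1 - α) * Real.sin (π * α) ∂ρ ≤ ‖Complex.exp (-z) * complexMGF id ρ z‖ := by
  rw [norm_mul, Complex.norm_exp, Complex.neg_re]
  refine le_trans ?_
    (mul_le_mul_of_nonneg_left (integral_exp_mul_sin_le_norm_complexMGF hρ hz) (Real.exp_pos _).le)
  simp only [← integral_const_mul, ← mul_assoc, ← Real.exp_add]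
  refine integral_mul_sin_pi_mul_mono hρ (by fun_prop) (by fun_prop) fun α _ ↦ ?_
  linarith [Real.add_one_le_exp (-z.re + z.re * α)]

theorem isLogStieltjes_inv_complexMGF_id (hρ : ∀ᵐ α ∂ρ, α ∈ Icc 0 1) (hρ0 : ρ (Ioo 0 1) ≠ 0) :
    IsLogStieltjes fun z ↦ (complexMGF id ρ z)⁻¹ where
  differentiableOn := (differentiable_complexMGF_id hρ).differentiableOn.fun_inv
    fun z hz ↦ complexMGF_id_ne_zero hρ hρ0 hz
  map_conj z := by rw [complexMGF_conj, map_inv₀]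
  tendsto_atTop := by
    refine tendsto_inv₀_cobounded.comp (tendsto_norm_atTop_iff_cobounded.mp ?_)
    have hlin : Tendsto (fun z : ℂ ↦ z.re * ∫ α, α * Real.sin (π * α) ∂ρ)
        (comap Complex.re atTop ⊓ 𝓟 logStrip) atTop :=
      (tendsto_comap.mono_left inf_le_left).atTop_mul_const
        (integral_mul_sin_pi_mul_pos hρ hρ0 continuous_id fun α hα ↦ hα.1)
    refine tendsto_atTop_mono' _ ?_ hlin
    filter_upwards [mem_inf_of_right (mem_principal_self _)] with z hz
    exact re_mul_integral_mul_sin_le_norm_complexMGF hρ hz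
  tendsto_exp_mul_atBot := by
    have hinv (z : ℂ) : Complex.exp z * (complexMGF id ρ z)⁻¹ =
        (Complex.exp (-z) * complexMGF id ρ z)⁻¹ := by rw [mul_inv, Complex.exp_neg, inv_inv]
    simp only [hinv]
    refine tendsto_inv₀_cobounded.comp (tendsto_norm_atTop_iff_cobounded.mp ?_)
    have hlin : Tendsto (fun z : ℂ ↦ -z.re * ∫ α, (1 - α) * Real.sin (π * α) ∂ρ)
        (comap Complex.re atBot ⊓ 𝓟 logStrip) atTop :=
      (tendsto_neg_atBot_atTop.comp (tendsto_comap.mono_left inf_le_left)).atTop_mul_const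
        (integral_mul_sin_pi_mul_pos hρ hρ0 (by fun_prop) fun α hα ↦ sub_pos.mpr hα.2)
    refine tendsto_atTop_mono' _ ?_ hlin
    filter_upwards [mem_inf_of_right (mem_principal_self _)] with z hz
    exact neg_re_mul_integral_mul_sin_le_norm_exp_neg_mul_complexMGF hρ hz
  im_nonpos x := by
    have him := integral_mul_sin_pi_mul_pos hρ hρ0 (by fun_prop) fun α _ ↦ Real.exp_pos (x * α)
    rw [← im_complexMGF_id_add_pi_mul_I hρ] at him
    rw [Complex.inv_im]
    exact div_nonpos_of_nonpos_of_nonneg (neg_nonpos.mpr him.le) (Complex.normSq_nonneg _)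

theorem mgf_id_log_eq_mul_integral_rpow (ρ : Measure ℝ) {p : ℝ} (hp : 0 < p) :
    mgf id ρ (Real.log p) = p * ∫ α, p ^ (α - 1) ∂ρ := by
  rw [mgf, ← integral_const_mul]
  refine integral_congr_ae (.of_forall fun α ↦ ?_)
  simp only [id, Real.rpow_sub_one hp.ne', Real.rpow_def_of_pos hp]
  field_simp

theorem exp_mul_inv_mgf_id_le (hρ : ∀ᵐ α ∂ρ, α ∈ Icc 0 1) {m x : ℝ} (hm : 0 < m) (hx : 0 < x)
    (hmass : m * x⁻¹ ≤ ρ.real (Ico (1 - x⁻¹) 1)) :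
    Real.exp x * (mgf id ρ x)⁻¹ ≤ Real.exp 1 / m * x := by
  have hmono : ρ.real (Ico (1 - x⁻¹) 1) ≤ ρ.real {α | 1 - x⁻¹ ≤ id α} :=
    measureReal_mono Ico_subset_Ici_self
  have hchernoff := measure_ge_le_exp_mul_mgf (X := id) (1 - x⁻¹) hx.le
    (integrable_of_continuous_of_ae_mem_Icc hρ (by fun_prop))
  have hlower : m * x⁻¹ ≤ Real.exp 1 * (Real.exp x)⁻¹ * mgf id ρ x := by
    refine (hmass.trans hmono).trans (hchernoff.trans_eq ?_)
    rw [← Real.exp_neg, ← Real.exp_add]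
    congr 2
    field_simp
    ring
  have hmgf : 0 < mgf id ρ x :=
    (mul_pos_iff_of_pos_left (by positivity)).mp ((by positivity : 0 < m * x⁻¹).trans_le hlower)
  field_simp at hlower ⊢
  linarith

theorem measure_Ioo_ne_zero {m : ℝ} (hm : 0 < m)
    (hmass : ∀ᶠ ε in 𝓝[>] 0, m * ε ≤ ρ.real (Ico (1 - ε) 1)) : ρ (Ioo 0 1) ≠ 0 := by
  obtain ⟨ε, hε, hε0, hε1⟩ := (hmass.and (Ioo_mem_nhdsGT one_pos)).exists
  have hsub : Ico (1 - ε) 1 ⊆ Ioo 0 1 := fun α hα ↦ ⟨by linarith [hα.1], hα.2⟩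
  have hpos : 0 < ρ.real (Ioo 0 1) :=
    (mul_pos hm hε0).trans_le (hε.trans (measureReal_mono hsub))
  exact (measureReal_ne_zero_iff (measure_ne_top _ _)).mp hpos.ne'

end UnitIntervalMeasure

theorem distributed_order_integral_kernel_bounds_general (ρ : Measure ℝ) [IsFiniteMeasure ρ]
    (hρ : ∀ᵐ α ∂ρ, α ∈ Icc 0 1) {m : ℝ} (hm : 0 < m)
    (hmass : ∀ᶠ ε in 𝓝[>] 0, m * ε ≤ ρ.real (Ico (1 - ε) 1))
    (κ : ℝ → ℝ) (hκ : ContinuousOn κ (Ioi 0))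
    (hlap : ∀ p : ℝ, 0 < p → IntegrableOn (fun t ↦ Real.exp (-p * t) * κ t) (Ioi 0) ∧
      ∫ t in Ioi 0, Real.exp (-p * t) * κ t = 1 / (p * ∫ α, p ^ (α - 1) ∂ρ)) :
    DifferentiableOn ℝ κ (Ioi 0) ∧
      ∃ C > (0 : ℝ), ∃ t₀ ∈ Ioo (0 : ℝ) 1, ∀ t : ℝ, 0 < t → t < t₀ →
        κ t ≤ C * Real.log (1 / t) ∧ |deriv κ t| ≤ C * t⁻¹ * Real.log (1 / t) := by
  have hG := isLogStieltjes_inv_complexMGF_id hρ (measure_Ioo_ne_zero hm hmass)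
  have hGre (x : ℝ) : ((complexMGF id ρ x)⁻¹).re = (mgf id ρ x)⁻¹ := by
    rw [complexMGF_ofReal, ← Complex.ofReal_inv, Complex.ofReal_re]
  obtain ⟨hdiff, hbound⟩ := hG.bounds_of_laplace_eq hκ fun p hp ↦ by
    simpa only [hGre, mgf_id_log_eq_mul_integral_rpow ρ hp, one_div] using hlap p hp
  have hlog : Tendsto (fun t ↦ Real.log t⁻¹) (𝓝[>] 0) atTop :=
    Real.tendsto_log_atTop.comp tendsto_inv_nhdsGT_zero
  obtain ⟨t₀, ht₀, hsub⟩ := (mem_nhdsGT_iff_exists_mem_Ioc_Ioo_subset one_half_pos).mp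
    ((hlog.eventually_gt_atTop 0).and
      (hlog.eventually (tendsto_inv_atTop_nhdsGT_zero.eventually hmass)))
  refine ⟨hdiff, Real.exp 1 / m, by positivity, t₀, ⟨ht₀.1, by linarith [ht₀.2]⟩,
    fun t ht htt₀ ↦ ?_⟩
  obtain ⟨hx, hx_mass⟩ := hsub ⟨ht, htt₀⟩
  have hmain := exp_mul_inv_mgf_id_le hρ hm hx hx_mass
  rw [Real.exp_log (inv_pos.mpr ht)] at hmain
  obtain ⟨hκt, hκ_deriv⟩ := hbound t ht
  rw [hGre] at hκt hκ_deriv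
  rw [one_div]
  refine ⟨hκt.trans hmain, ?_⟩
  calc |deriv κ t|
    _ ≤ t⁻¹ * (t⁻¹ * (mgf id ρ (Real.log t⁻¹))⁻¹) := hκ_deriv.trans_eq (by ring)
    _ ≤ t⁻¹ * (Real.exp 1 / m * Real.log t⁻¹) := by gcongr
    _ = Real.exp 1 / m * t⁻¹ * Real.log t⁻¹ := by ring

section Density

/-- The measure `μ(α) dα` on `[0, 1]` that distributes the order of integration. -/
noncomputable def orderMeasure (μ : ℝ → ℝ) : Measure ℝ :=
  (volume.restrict (Ioc 0 1)).withDensity fun α ↦ ENNReal.ofReal (μ α)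

variable {μ : ℝ → ℝ}

theorem ae_orderMeasure_mem_Icc (μ : ℝ → ℝ) : ∀ᵐ α ∂orderMeasure μ, α ∈ Icc 0 1 :=
  (withDensity_absolutelyContinuous _ _).ae_le <|
    (ae_restrict_mem measurableSet_Ioc).mono fun _ hα ↦ Ioc_subset_Icc_self hα

theorem isFiniteMeasure_orderMeasure (hc : ContinuousOn μ (Icc 0 1)) :
    IsFiniteMeasure (orderMeasure μ) :=
  isFiniteMeasure_withDensity_ofReal (hc.integrableOn_Icc.mono_set Ioc_subset_Icc_self).2

theorem integral_rpow_orderMeasure (hc : ContinuousOn μ (Icc 0 1))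
    (hnn : ∀ α ∈ Icc (0 : ℝ) 1, 0 ≤ μ α) (p : ℝ) :
    ∫ α, p ^ (α - 1) ∂orderMeasure μ = Kreal μ p := by
  have hmeas : AEMeasurable (fun α ↦ ENNReal.ofReal (μ α)) (volume.restrict (Ioc 0 1)) :=
    ((hc.mono Ioc_subset_Icc_self).aemeasurable measurableSet_Ioc).ennreal_ofReal
  rw [orderMeasure, integral_withDensity_eq_integral_toReal_smul₀ hmeas
    (.of_forall fun _ ↦ ENNReal.ofReal_lt_top), Kreal,
    intervalIntegral.integral_of_le zero_le_one]
  refine setIntegral_congr_fun measurableSet_Ioc fun α hα ↦ ?_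
  rw [ENNReal.toReal_ofReal (hnn α (Ioc_subset_Icc_self hα)), smul_eq_mul, mul_comm]

theorem eventually_mul_le_orderMeasure_Ico (hc : ContinuousOn μ (Icc 0 1)) {m : ℝ} (hm0 : 0 ≤ m)
    (hm : m < μ 1) : ∀ᶠ ε in 𝓝[>] 0, m * ε ≤ (orderMeasure μ).real (Ico (1 - ε) 1) := by
  have := isFiniteMeasure_orderMeasure hc
  have hnear : ∀ᶠ α in 𝓝[≤] 1, m ≤ μ α := by
    rw [← nhdsWithin_Icc_eq_nhdsLE zero_lt_one]
    exact (hc 1 (right_mem_Icc.mpr zero_le_one)).eventually_const_le hm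
  obtain ⟨l, hl, hlμ⟩ := (mem_nhdsLE_iff_exists_mem_Ico_Ioc_subset zero_lt_one).mp hnear
  filter_upwards [Ioo_mem_nhdsGT (sub_pos.mpr hl.2)] with ε hε
  have hsub : Ico (1 - ε) 1 ⊆ Ioc l 1 := fun α hα ↦ ⟨by linarith [hε.2, hα.1], hα.2.le⟩
  rw [measureReal_def, ← ENNReal.ofReal_le_iff_le_toReal (measure_ne_top _ _)]
  calc ENNReal.ofReal (m * ε)
    _ = ∫⁻ _ in Ico (1 - ε) 1, ENNReal.ofReal m := by
      rw [setLIntegral_const, Real.volume_Ico, sub_sub_cancel, ENNReal.ofReal_mul hm0]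
    _ ≤ ∫⁻ α in Ico (1 - ε) 1, ENNReal.ofReal (μ α) :=
      setLIntegral_mono' measurableSet_Ico fun α hα ↦ ENNReal.ofReal_le_ofReal (hlμ (hsub hα))
    _ = orderMeasure μ (Ico (1 - ε) 1) := by
      rw [orderMeasure, withDensity_apply _ measurableSet_Ico,
        Measure.restrict_restrict measurableSet_Ico,
        inter_eq_left.mpr (hsub.trans (Ioc_subset_Ioc_left hl.1))]

end Density

theorem distributed_order_integral_kernel_bounds (μ : ℝ → ℝ)
    (hc : ContinuousOn μ (Set.Icc 0 1))
    (hnn : ∀ α ∈ Set.Icc (0:ℝ) 1, 0 ≤ μ α)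
    (hne : ∃ α ∈ Set.Icc (0:ℝ) 1, μ α ≠ 0)
    (hC3 : ContDiffOn ℝ 3 μ (Set.Icc 0 1))
    (h1 : μ 1 ≠ 0)
    (h0 : μ 0 ≠ 0 ∨ ∃ a ν : ℝ, 0 < a ∧ 0 < ν ∧
      Tendsto (fun α : ℝ => μ α / (a * α ^ ν)) (nhdsWithin 0 (Set.Ioi 0)) (nhds 1))
    (κ : ℝ → ℝ) (hκc : ContinuousOn κ (Set.Ioi 0))
    (hκloc : LocallyIntegrableOn κ (Set.Ioi 0))
    (hκdiff : DifferentiableOn ℝ κ (Set.Ioi 0))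
    (hlap : ∀ p : ℝ, 0 < p →
      IntegrableOn (fun t : ℝ => Real.exp (-p * t) * κ t) (Set.Ioi 0) ∧
      ∫ t in Set.Ioi (0:ℝ), Real.exp (-p * t) * κ t = 1 / (p * Kreal μ p)) :
    ∃ C > (0:ℝ), ∃ t₀ ∈ Set.Ioo (0:ℝ) 1, ∀ t : ℝ, 0 < t → t < t₀ →
      κ t ≤ C * Real.log (1 / t) ∧
      |deriv κ t| ≤ C * t⁻¹ * Real.log (1 / t) := by
  have hμ1 : 0 < μ 1 := (hnn 1 (right_mem_Icc.mpr zero_le_one)).lt_of_ne' h1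
  have := isFiniteMeasure_orderMeasure hc
  exact (distributed_order_integral_kernel_bounds_general (orderMeasure μ)
    (ae_orderMeasure_mem_Icc μ) (half_pos hμ1)
    (eventually_mul_le_orderMeasure_Ico hc (half_pos hμ1).le (half_lt_self hμ1)) κ hκc
    (by simpa only [integral_rpow_orderMeasure hc hnn] using hlap)).2
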